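/- arXiv:math/0304381 — 2 statements merged into one kernel-verified Lean document; each statement's English description precedes it below -/
import Mathlib

section
/- Let k, μ, s ∈ ℂ with s not a nonpositive integer and μ + s ≠ 0. Define y₂(x) = (k·x/(μ+s))·(1 + (μ(1−x)/s)·F(k+1, 1−μ, s+1, x)/F(k, −μ, s, x)). Let U ⊆ ℂ be an open subset of the unit disc {|x| < 1} on which x ≠ 0, x ≠ 1, F(k, −μ, s, x) ≠ 0, and y₂(x) ∉ {0, 1, x}. Then y₂ solves P_VI((μ+s)²/2, −k²/2, (μ+1)²/2, (1−(k−s)²)/2) on U. -/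
/-- `y` solves the Painlevé VI equation with parameters `(α, β, γ, δ)` on `U`:
`y` is twice differentiable on `U`, and at every `x ∈ U` we have `x ≠ 0`, `x ≠ 1`,
`y x ∉ {0, 1, x}` and the Painlevé VI equation holds. -/
def SolvesPVI (α β γ δ : ℂ) (U : Set ℂ) (y : ℂ → ℂ) : Prop :=
  (∀ x ∈ U, DifferentiableAt ℂ y x) ∧
  (∀ x ∈ U, DifferentiableAt ℂ (deriv y) x) ∧
  ∀ x ∈ U, x ≠ 0 ∧ x ≠ 1 ∧ y x ≠ 0 ∧ y x ≠ 1 ∧ y x ≠ x ∧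
    deriv (deriv y) x =
      (1 / 2) * (1 / y x + 1 / (y x - 1) + 1 / (y x - x)) * (deriv y x) ^ 2
        - (1 / x + 1 / (x - 1) + 1 / (y x - x)) * deriv y x
        + (y x * (y x - 1) * (y x - x) / (x ^ 2 * (x - 1) ^ 2)) *
            (α + β * x / (y x) ^ 2 + γ * (x - 1) / (y x - 1) ^ 2
              + δ * x * (x - 1) / (y x - x) ^ 2)

/-- The Gauss hypergeometric series `F(a, b, c, x) = Σ (a)ₙ(b)ₙ/(c)ₙ · xⁿ/n!`,
where `(a)ₙ` is the ascending Pochhammer symbol. -/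
noncomputable def hypF (a b c x : ℂ) : ℂ :=
  ∑' n : ℕ,
    ((ascPochhammer ℂ n).eval a * (ascPochhammer ℂ n).eval b / (ascPochhammer ℂ n).eval c)
      * x ^ n / (n.factorial : ℂ)

/-- The solution `y₂(k, μ, s)`. -/
noncomputable def y2 (k μ s : ℂ) : ℂ → ℂ := fun x =>
  (k * x / (μ + s)) *
    (1 + (μ * (1 - x) / s) * hypF (k + 1) (1 - μ) (s + 1) x / hypF k (-μ) s x)

/-!
The logarithmic derivative of a solution of the hypergeometric equation solves a Riccati equation,
and the contiguity `F'(a, b, c, x) = (ab/c) F(a+1, b+1, c+1, x)` turns `y₂` into an affine function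
of `F'/F`; thus `y₂` satisfies `x(x-1)y' = Ay² + (Bx+C)y + Dx` with `A = -(μ+s)`, `B = 1+k+μ`,
`C = s-1`, `D = -k`, hence with `A + B + C + D = 0`. Such a Riccati equation and its derivative
express `y'` and `y''` as polynomials in `y`, and substituting these shows that every solution
solves the Painlevé VI equation with parameters `(A²/2, -D²/2, (A+C)²/2, (1-(1+C+D)²)/2)`.
-/

open Filter Topology
open scoped ENNReal

section PowerSeries

variable {𝕜 E : Type*} [NontriviallyNormedField 𝕜] [NormedAddCommGroup E] [NormedSpace 𝕜 E]
  {f : 𝕜 → E} {p : FormalMultilinearSeries 𝕜 𝕜 E} {r : ℝ≥0∞} {x : 𝕜}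

lemma hasSum_pow_smul_coeff (hf : HasFPowerSeriesOnBall f p 0 r) (hx : x ∈ Metric.eball 0 r) :
    HasSum (fun n ↦ x ^ n • p.coeff n) (f x) := by
  simpa using hf.hasSum hx

/-- The formal derivative of a power series in one variable. -/
noncomputable def formalDeriv (p : FormalMultilinearSeries 𝕜 𝕜 E) :
    FormalMultilinearSeries 𝕜 𝕜 E :=
  (ContinuousLinearMap.apply 𝕜 E (1 : 𝕜)).compFormalMultilinearSeries p.derivSeries

lemma coeff_formalDeriv (p : FormalMultilinearSeries 𝕜 𝕜 E) (n : ℕ) :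
    (formalDeriv p).coeff n = (n + 1) • p.coeff (n + 1) :=
  p.derivSeries_coeff_one n

lemma hasFPowerSeriesOnBall_deriv [CompleteSpace E] (hf : HasFPowerSeriesOnBall f p x r) :
    HasFPowerSeriesOnBall (deriv f) (formalDeriv p) x r :=
  (ContinuousLinearMap.apply 𝕜 E (1 : 𝕜)).comp_hasFPowerSeriesOnBall hf.fderiv

end PowerSeries

section HypergeometricEquation

variable {𝕜 : Type*} [NontriviallyNormedField 𝕜]

lemma hasSum_natCast_mul_pow {u : ℕ → 𝕜} {x S : 𝕜}
    (h : HasSum (fun n ↦ x ^ n * ((n + 1) * u (n + 1))) S) :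
    HasSum (fun n ↦ x ^ n * (n * u n)) (x * S) := by
  rw [← hasSum_nat_add_iff' 1]
  simp only [Finset.range_one, Finset.sum_singleton, Nat.cast_zero, zero_mul, mul_zero, sub_zero]
  refine (h.mul_left x).congr_fun fun n ↦ ?_
  push_cast
  ring

/-- `F` solves the hypergeometric equation with parameters `a`, `b`, `c` at the point `x`, the two
derivatives that the equation involves being required to exist. -/
structure SolvesHypergeometricAt (a b c : 𝕜) (F : 𝕜 → 𝕜) (x : 𝕜) : Prop where
  differentiableAt : DifferentiableAt 𝕜 F x
  differentiableAt_deriv : DifferentiableAt 𝕜 (deriv F) x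
  ode : x * (1 - x) * deriv (deriv F) x + (c - (a + b + 1) * x) * deriv F x = a * b * F x

theorem solvesHypergeometricAt_of_coeff_recurrence [CompleteSpace 𝕜] {a b c x : 𝕜} {F : 𝕜 → 𝕜}
    {p : FormalMultilinearSeries 𝕜 𝕜 𝕜} {r : ℝ≥0∞} (hF : HasFPowerSeriesOnBall F p 0 r)
    (hrec : ∀ n : ℕ, (n + 1) * (n + c) * p.coeff (n + 1) = (n + a) * (n + b) * p.coeff n)
    (hx : x ∈ Metric.eball 0 r) : SolvesHypergeometricAt a b c F x := by
  have hF' := hasFPowerSeriesOnBall_deriv hF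
  have sum₀ := hasSum_pow_smul_coeff hF hx
  have sum₁ := hasSum_pow_smul_coeff hF' hx
  have sum₂ := hasSum_pow_smul_coeff (hasFPowerSeriesOnBall_deriv hF') hx
  simp only [coeff_formalDeriv, smul_eq_mul, nsmul_eq_mul, Nat.cast_add, Nat.cast_one]
    at sum₀ sum₁ sum₂
  have sum_xF' : HasSum (fun n ↦ x ^ n * (n * p.coeff n)) (x * deriv F x) :=
    hasSum_natCast_mul_pow sum₁
  have sum_xF'' : HasSum (fun n : ℕ ↦ x ^ n * (n * ((n + 1) * p.coeff (n + 1))))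
      (x * deriv (deriv F) x) :=
    hasSum_natCast_mul_pow (u := fun n ↦ (n + 1) * p.coeff (n + 1)) (by simpa using sum₂)
  have sum_xxF'' : HasSum (fun n : ℕ ↦ x ^ n * (n * ((n - 1) * p.coeff n)))
      (x * (x * deriv (deriv F) x)) := by
    refine hasSum_natCast_mul_pow (u := fun n ↦ (n - 1) * p.coeff n) (sum_xF''.congr_fun fun n ↦ ?_)
    push_cast
    ring
  have key : x * deriv (deriv F) x + c * deriv F x =
      x * (x * deriv (deriv F) x) + (a + b + 1) * (x * deriv F x) + a * b * F x := by
    refine (sum_xF''.add (sum₁.mul_left c)).unique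
      (((sum_xxF''.add (sum_xF'.mul_left (a + b + 1))).add (sum₀.mul_left (a * b))).congr_fun
        fun n ↦ ?_)
    linear_combination x ^ n * hrec n
  exact ⟨(hF.analyticAt_of_mem hx).differentiableAt, (hF'.analyticAt_of_mem hx).differentiableAt,
    by linear_combination key⟩

end HypergeometricEquation

section OrdinaryHypergeometric

variable {𝕂 : Type*} [RCLike 𝕂] (a b c : 𝕂)

theorem one_le_radius_ordinaryHypergeometricSeries (𝔸 : Type*) [NormedDivisionRing 𝔸]
    [NormedAlgebra 𝕂 𝔸] : 1 ≤ (ordinaryHypergeometricSeries 𝔸 a b c).radius := by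
  by_cases! habc : ∃ n : ℕ, a = -n ∨ b = -n ∨ c = -n
  · obtain ⟨n, rfl | rfl | rfl⟩ := habc
    · simp [ordinaryHypergeometric_radius_top_of_neg_nat₁]
    · simp [ordinaryHypergeometric_radius_top_of_neg_nat₂]
    · simp [ordinaryHypergeometric_radius_top_of_neg_nat₃]
  · refine (ordinaryHypergeometricSeries_radius_eq_one 𝔸 a b c fun n ↦ ?_).ge
    simpa only [ne_eq, eq_comm (a := (n : 𝕂)), neg_eq_iff_eq_neg] using habc n

lemma hasFPowerSeriesOnBall_ordinaryHypergeometric :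
    HasFPowerSeriesOnBall (₂F₁ a b c : 𝕂 → 𝕂) (ordinaryHypergeometricSeries 𝕂 a b c) 0 1 :=
  have hr := one_le_radius_ordinaryHypergeometricSeries a b c 𝕂
  ((ordinaryHypergeometricSeries 𝕂 a b c).hasFPowerSeriesOnBall (zero_lt_one.trans_le hr)).mono
    zero_lt_one hr

lemma coeff_ordinaryHypergeometricSeries (n : ℕ) :
    (ordinaryHypergeometricSeries 𝕂 a b c).coeff n = ordinaryHypergeometricCoefficient a b c n :=
  FormalMultilinearSeries.coeff_ofScalars

variable {c} in
lemma ordinaryHypergeometricCoefficient_recurrence {n : ℕ} (hc : (n : 𝕂) + c ≠ 0) :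
    (n + 1) * (n + c) * ordinaryHypergeometricCoefficient a b c (n + 1) =
      (n + a) * (n + b) * ordinaryHypergeometricCoefficient a b c n := by
  have hn : (n : 𝕂) + 1 ≠ 0 := n.cast_add_one_ne_zero
  simp only [ordinaryHypergeometricCoefficient, ascPochhammer_succ_eval, Nat.factorial_succ,
    Nat.cast_mul, Nat.cast_succ, mul_inv, add_comm _ (n : 𝕂)]
  field_simp

lemma succ_mul_ordinaryHypergeometricCoefficient_succ (n : ℕ) :
    (n + 1) * ordinaryHypergeometricCoefficient a b c (n + 1) =
      a * b / c * ordinaryHypergeometricCoefficient (a + 1) (b + 1) (c + 1) n := by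
  have hn : (n : 𝕂) + 1 ≠ 0 := n.cast_add_one_ne_zero
  simp only [ordinaryHypergeometricCoefficient, ascPochhammer_succ_left, Polynomial.eval_mul,
    Polynomial.eval_comp, Polynomial.eval_add, Polynomial.eval_X, Polynomial.eval_one,
    Nat.factorial_succ, Nat.cast_mul, Nat.cast_succ, mul_inv]
  field_simp

variable {x : 𝕂}

theorem deriv_ordinaryHypergeometric (hx : ‖x‖ < 1) :
    deriv (₂F₁ a b c) x = a * b / c * ₂F₁ (a + 1) (b + 1) (c + 1) x := by
  have hx' : x ∈ Metric.eball 0 1 := by simpa [← ofReal_norm] using hx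
  have sum_deriv := hasSum_pow_smul_coeff
    (hasFPowerSeriesOnBall_deriv (hasFPowerSeriesOnBall_ordinaryHypergeometric a b c)) hx'
  have sum_succ := (hasSum_pow_smul_coeff
    (hasFPowerSeriesOnBall_ordinaryHypergeometric (a + 1) (b + 1) (c + 1)) hx').mul_left (a * b / c)
  refine sum_deriv.unique (sum_succ.congr_fun fun n ↦ ?_)
  have h := succ_mul_ordinaryHypergeometricCoefficient_succ a b c n
  simp only [coeff_formalDeriv, coeff_ordinaryHypergeometricSeries, smul_eq_mul, nsmul_eq_mul,
    Nat.cast_add, Nat.cast_one]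
  linear_combination x ^ n * h

variable {c} in
theorem solvesHypergeometricAt_ordinaryHypergeometric (hc : ∀ n : ℕ, c ≠ -n) (hx : ‖x‖ < 1) :
    SolvesHypergeometricAt a b c (₂F₁ a b c) x := by
  refine solvesHypergeometricAt_of_coeff_recurrence
    (hasFPowerSeriesOnBall_ordinaryHypergeometric a b c) (fun n ↦ ?_)
    (by simpa [← ofReal_norm] using hx)
  simp only [coeff_ordinaryHypergeometricSeries]
  exact ordinaryHypergeometricCoefficient_recurrence a b
    fun h ↦ hc n (eq_neg_of_add_eq_zero_right h)

end OrdinaryHypergeometric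

section Riccati

variable {𝕜 : Type*} [NontriviallyNormedField 𝕜]

/-- The function `x(a - (1-x)F'/F)/(c-b)`, which linearizes a Riccati equation: it turns solutions
`F` of the hypergeometric equation with parameters `a`, `b`, `c` into solutions of
`x(x-1)y' = (b-c)y² + ((1+a-b)x + c-1)y - ax`. It is identically zero for `b = c`. -/
noncomputable def riccatiOfHypergeometric (a b c : 𝕜) (F : 𝕜 → 𝕜) (x : 𝕜) : 𝕜 :=
  x / (c - b) * (a - (1 - x) * logDeriv F x)

/-- `y` solves the Riccati equation `x(x-1)y' = Ay² + (Bx+C)y + Dx` at the point `x`, where it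
is required to be differentiable. For `A + B + C + D = 0` these equations give the one-parameter
families of classical solutions of the Painlevé VI equation. -/
structure SolvesRiccatiAt (A B C D : 𝕜) (y : 𝕜 → 𝕜) (x : 𝕜) : Prop where
  differentiableAt : DifferentiableAt 𝕜 y x
  ode : x * (x - 1) * deriv y x = A * y x ^ 2 + (B * x + C) * y x + D * x

theorem SolvesHypergeometricAt.solvesRiccatiAt {a b c x : 𝕜} {F : 𝕜 → 𝕜}
    (h : SolvesHypergeometricAt a b c F x) (hbc : c - b ≠ 0) (hFx : F x ≠ 0) :
    SolvesRiccatiAt (b - c) (1 + a - b) (c - 1) (-a) (riccatiOfHypergeometric a b c F) x := by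
  have hlog : HasDerivAt (logDeriv F)
      ((deriv (deriv F) x * F x - deriv F x * deriv F x) / F x ^ 2) x :=
    h.differentiableAt_deriv.hasDerivAt.div h.differentiableAt.hasDerivAt hFx
  have hy : HasDerivAt (riccatiOfHypergeometric a b c F) _ x :=
    ((hasDerivAt_id' x).div_const (c - b)).mul
      ((((hasDerivAt_id' x).const_sub 1).mul hlog).const_sub a)
  refine ⟨hy.differentiableAt, ?_⟩
  rw [hy.deriv]
  simp only [riccatiOfHypergeometric, logDeriv_apply]
  field_simp
  linear_combination ((c - b) * x * (1 - x) * F x) * h.ode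

lemma SolvesRiccatiAt.congr {A B C D x : 𝕜} {y z : 𝕜 → 𝕜} (hy : SolvesRiccatiAt A B C D y x)
    (hyz : y =ᶠ[𝓝 x] z) : SolvesRiccatiAt A B C D z x where
  differentiableAt := hy.differentiableAt.congr_of_eventuallyEq hyz.symm
  ode := by rw [← hyz.deriv_eq, ← hyz.eq_of_nhds, hy.ode]

end Riccati

section PainleveVI

lemma differentiableAt_deriv_of_eventually_solvesRiccatiAt {A B C D x : ℂ} {y : ℂ → ℂ}
    (hy : ∀ᶠ z in 𝓝 x, SolvesRiccatiAt A B C D y z) : DifferentiableAt ℂ (deriv y) x :=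
  (Complex.analyticAt_iff_eventually_differentiableAt.2
    (hy.mono fun _ hz ↦ hz.differentiableAt)).deriv.differentiableAt

lemma deriv_deriv_of_eventually_solvesRiccatiAt {A B C D x : ℂ} {y : ℂ → ℂ}
    (hy : ∀ᶠ z in 𝓝 x, SolvesRiccatiAt A B C D y z) :
    x * (x - 1) * deriv (deriv y) x + (2 * x - 1) * deriv y x =
      (2 * A * y x + B * x + C) * deriv y x + B * y x + D := by
  have hid := hasDerivAt_id' x
  have hy₁ := hy.self_of_nhds.differentiableAt.hasDerivAt
  have hy₂ := (differentiableAt_deriv_of_eventually_solvesRiccatiAt hy).hasDerivAt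
  have hleft := (hid.fun_mul (hid.sub_const 1)).fun_mul hy₂
  have hright := (((hy₁.fun_pow 2).const_mul A).fun_add
    (((hid.const_mul B).add_const C).fun_mul hy₁)).fun_add (hid.const_mul D)
  have key := (hleft.congr_of_eventuallyEq (hy.mono fun z hz ↦ hz.ode.symm)).unique hright
  linear_combination key

lemma painleveVI_of_riccati {K : Type*} [Field K] [NeZero (2 : K)] {A B C D x y p q : K}
    (hsum : A + B + C + D = 0)
    (hp : x * (x - 1) * p = A * y ^ 2 + (B * x + C) * y + D * x)
    (hq : x * (x - 1) * q + (2 * x - 1) * p = (2 * A * y + B * x + C) * p + B * y + D)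
    (hx₀ : x ≠ 0) (hx₁ : x ≠ 1) (hy₀ : y ≠ 0) (hy₁ : y ≠ 1) (hyx : y ≠ x) :
    q = (1 / 2) * (1 / y + 1 / (y - 1) + 1 / (y - x)) * p ^ 2
        - (1 / x + 1 / (x - 1) + 1 / (y - x)) * p
        + (y * (y - 1) * (y - x) / (x ^ 2 * (x - 1) ^ 2)) *
            (A ^ 2 / 2 + -D ^ 2 / 2 * x / y ^ 2 + (A + C) ^ 2 / 2 * (x - 1) / (y - 1) ^ 2
              + (1 - (1 + C + D) ^ 2) / 2 * x * (x - 1) / (y - x) ^ 2) := by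
  have h2 : (2 : K) ≠ 0 := two_ne_zero
  have hx₁' : x - 1 ≠ 0 := sub_ne_zero.2 hx₁
  have hy₁' : y - 1 ≠ 0 := sub_ne_zero.2 hy₁
  have hyx' : y - x ≠ 0 := sub_ne_zero.2 hyx
  have hp_eq : p = (A * y ^ 2 + (B * x + C) * y + D * x) / (x * (x - 1)) := by
    rw [eq_div_iff (mul_ne_zero hx₀ hx₁')]
    linear_combination hp
  have hq_eq : q = ((2 * A * y + B * x + C) * p + B * y + D - (2 * x - 1) * p) / (x * (x - 1)) := by
    rw [eq_div_iff (mul_ne_zero hx₀ hx₁')]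
    linear_combination hq
  have hB : B = -(A + C + D) := by linear_combination hsum
  rw [hq_eq, hp_eq, hB]
  field_simp
  ring

theorem SolvesPVI.of_riccati {A B C D : ℂ} {y : ℂ → ℂ} {U : Set ℂ} (hU : IsOpen U)
    (hsum : A + B + C + D = 0) (hy : ∀ x ∈ U, SolvesRiccatiAt A B C D y x)
    (hreg : ∀ x ∈ U, x ≠ 0 ∧ x ≠ 1 ∧ y x ≠ 0 ∧ y x ≠ 1 ∧ y x ≠ x) :
    SolvesPVI (A ^ 2 / 2) (-D ^ 2 / 2) ((A + C) ^ 2 / 2) ((1 - (1 + C + D) ^ 2) / 2) U y := by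
  have hy' : ∀ x ∈ U, ∀ᶠ z in 𝓝 x, SolvesRiccatiAt A B C D y z :=
    fun x hx ↦ eventually_of_mem (hU.mem_nhds hx) hy
  refine ⟨fun x hx ↦ (hy x hx).differentiableAt,
    fun x hx ↦ differentiableAt_deriv_of_eventually_solvesRiccatiAt (hy' x hx), fun x hx ↦ ?_⟩
  obtain ⟨hx₀, hx₁, hy₀, hy₁, hyx⟩ := hreg x hx
  exact ⟨hx₀, hx₁, hy₀, hy₁, hyx, painleveVI_of_riccati hsum (hy x hx).ode
    (deriv_deriv_of_eventually_solvesRiccatiAt (hy' x hx)) hx₀ hx₁ hy₀ hy₁ hyx⟩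

end PainleveVI

lemma hypF_eq_ordinaryHypergeometric (a b c : ℂ) : hypF a b c = ₂F₁ a b c := by
  ext x
  rw [hypF, ordinaryHypergeometric_eq_tsum]
  exact tsum_congr fun n ↦ by rw [smul_eq_mul]; ring

lemma y2_eqOn_riccatiOfHypergeometric (k μ s : ℂ) :
    Set.EqOn (y2 k μ s) (riccatiOfHypergeometric k (-μ) s (₂F₁ k (-μ) s)) (Metric.ball 0 1) := by
  intro x hx
  rw [y2, riccatiOfHypergeometric, logDeriv_apply,
    deriv_ordinaryHypergeometric _ _ _ (mem_ball_zero_iff.1 hx), neg_add_eq_sub,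
    hypF_eq_ordinaryHypergeometric, hypF_eq_ordinaryHypergeometric]
  ring

lemma y2_solvesRiccatiAt {k μ s x : ℂ} (hs : ∀ m : ℕ, s ≠ -(m : ℂ)) (hμs : μ + s ≠ 0)
    (hx : x ∈ Metric.ball 0 1) (hF : hypF k (-μ) s x ≠ 0) :
    SolvesRiccatiAt (-(μ + s)) (1 + k + μ) (s - 1) (-k) (y2 k μ s) x := by
  rw [hypF_eq_ordinaryHypergeometric] at hF
  have hsub : s - -μ ≠ 0 := by rwa [sub_neg_eq_add, add_comm]
  have hric := (solvesHypergeometricAt_ordinaryHypergeometric k (-μ) hs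
    (mem_ball_zero_iff.1 hx)).solvesRiccatiAt hsub hF
  rw [sub_neg_eq_add, ← neg_add'] at hric
  exact hric.congr ((y2_eqOn_riccatiOfHypergeometric k μ s).eventuallyEq_of_mem
    (Metric.isOpen_ball.mem_nhds hx)).symm

/-- **Second case** `a = -(μ+s)`: the function
`y₂(x) = (kx/(μ+s))(1 + (μ(1-x)/s)·F(k+1, 1-μ, s+1, x)/F(k, -μ, s, x))`
solves `P_VI((μ+s)²/2, -k²/2, (μ+1)²/2, (1-(k-s)²)/2)`. -/
theorem y2_solves_painleveVI (k μ s : ℂ) (hs : ∀ m : ℕ, s ≠ -(m : ℂ))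
    (hμs : μ + s ≠ 0)
    (U : Set ℂ) (hU : IsOpen U) (hUball : U ⊆ Metric.ball (0 : ℂ) 1)
    (hreg : ∀ x ∈ U, x ≠ 0 ∧ x ≠ 1 ∧ hypF k (-μ) s x ≠ 0 ∧
      y2 k μ s x ≠ 0 ∧ y2 k μ s x ≠ 1 ∧ y2 k μ s x ≠ x) :
    SolvesPVI ((μ + s) ^ 2 / 2) (-k ^ 2 / 2) ((μ + 1) ^ 2 / 2)
      ((1 - (k - s) ^ 2) / 2) U (y2 k μ s) := by
  have hriccati (x) (hx : x ∈ U) :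
      SolvesRiccatiAt (-(μ + s)) (1 + k + μ) (s - 1) (-k) (y2 k μ s) x :=
    y2_solvesRiccatiAt hs hμs (hUball hx) (hreg x hx).2.2.1
  have hvalues (x) (hx : x ∈ U) :
      x ≠ 0 ∧ x ≠ 1 ∧ y2 k μ s x ≠ 0 ∧ y2 k μ s x ≠ 1 ∧ y2 k μ s x ≠ x :=
    ⟨(hreg x hx).1, (hreg x hx).2.1, (hreg x hx).2.2.2⟩
  convert SolvesPVI.of_riccati hU (by ring) hriccati hvalues using 2 <;> ring
end

section
/- The rational function w(x) = (x/4)·(x+8)(x²+14x+21)/(2x+7)² solves P_VI(0, −18, 50, 0) on any open set U ⊆ ℂ on which x ≠ 0, x ≠ 1, 2x + 7 ≠ 0, and w(x) ∉ {0, 1, x}. -/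
/-- The rational function from the counterexample to Theorem 4.2 of Yuan–Li. -/
noncomputable def wCounter : ℂ → ℂ := fun x =>
  (x / 4) * ((x + 8) * (x ^ 2 + 14 * x + 21)) / (2 * x + 7) ^ 2

/-!
Painlevé VI is the result of eliminating the momentum `p` from Okamoto's Hamiltonian system, whose
two equations are of first order and polynomial in `(q, p)`. For the exponents
`(θ₀, θ₁, θₓ, θinf) = (-6, 10, 1, 0)` the momentum conjugate to `w` is
`p = 8 (2x + 7)² / (x (x - 1) (x + 7) (x + 8))`: with these signs the poles that `p` could have at
the other zeros of `w` and `w - 1`, and at the zeros of `x² + 7x + 28`, a factor of `w - x`, all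
cancel. Of the poles left over, `0` and `1` are singular points of the equation, while `w = 1` at
`-7` and `w = 0` at `-8`, so all of them lie outside `U`.
-/

/-- The value which Painlevé VI with parameters `(α, β, γ, δ)` prescribes for `y''` at a point `x`
where the solution takes the value `y` and has derivative `v`. -/
noncomputable def painleveVIRhs (α β γ δ x y v : ℂ) : ℂ :=
  (1 / 2) * (1 / y + 1 / (y - 1) + 1 / (y - x)) * v ^ 2
    - (1 / x + 1 / (x - 1) + 1 / (y - x)) * v
    + (y * (y - 1) * (y - x) / (x ^ 2 * (x - 1) ^ 2)) *
        (α + β * x / y ^ 2 + γ * (x - 1) / (y - 1) ^ 2 + δ * x * (x - 1) / (y - x) ^ 2)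

theorem SolvesPVI.of_hasDerivAt {α β γ δ : ℂ} {U : Set ℂ} {y y' y'' : ℂ → ℂ} (hU : IsOpen U)
    (hy : ∀ x ∈ U, HasDerivAt y (y' x) x) (hy' : ∀ x ∈ U, HasDerivAt y' (y'' x) x)
    (hreg : ∀ x ∈ U, x ≠ 0 ∧ x ≠ 1 ∧ y x ≠ 0 ∧ y x ≠ 1 ∧ y x ≠ x)
    (heq : ∀ x ∈ U, y'' x = painleveVIRhs α β γ δ x (y x) (y' x)) :
    SolvesPVI α β γ δ U y := by
  have hderiv : ∀ x ∈ U, HasDerivAt (deriv y) (y'' x) x := fun x hx ↦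
    (hy' x hx).congr_of_eventuallyEq <|
      Filter.eventually_of_mem (hU.mem_nhds hx) fun z hz ↦ (hy z hz).deriv
  refine ⟨fun x hx ↦ (hy x hx).differentiableAt, fun x hx ↦ (hderiv x hx).differentiableAt,
    fun x hx ↦ ?_⟩
  obtain ⟨h0, h1, hy0, hy1, hyx⟩ := hreg x hx
  refine ⟨h0, h1, hy0, hy1, hyx, ?_⟩
  rw [(hderiv x hx).deriv, (hy x hx).deriv]
  exact heq x hx

/-- The right-hand side `∂H/∂p` of the equation for `q'` in the Hamiltonian form of Painlevé VI,
where `x (x - 1) H = q (q - 1) (q - x) p² - (θ₀ (q - 1) (q - x) + θ₁ q (q - x)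
+ (θₓ - 1) q (q - 1)) p + κ (q - x)` and `4 κ = (θ₀ + θ₁ + θₓ - 1)² - θinf²` is Okamoto's
Hamiltonian; `θinf` is the exponent at infinity. -/
noncomputable def okamotoVelocity (θ₀ θ₁ θₓ x q p : ℂ) : ℂ :=
  (2 * q * (q - 1) * (q - x) * p
    - (θ₀ * (q - 1) * (q - x) + θ₁ * q * (q - x) + (θₓ - 1) * q * (q - 1))) / (x * (x - 1))

/-- The right-hand side `-∂H/∂q` of the equation for `p'` in the Hamiltonian form of Painlevé VI,
with the Hamiltonian of `okamotoVelocity`. -/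
noncomputable def okamotoForce (θ₀ θ₁ θₓ θinf x q p : ℂ) : ℂ :=
  (-(3 * q ^ 2 - 2 * (1 + x) * q + x) * p ^ 2
    + (θ₀ * (2 * q - 1 - x) + θ₁ * (2 * q - x) + (θₓ - 1) * (2 * q - 1)) * p
    - ((θ₀ + θ₁ + θₓ - 1) ^ 2 - θinf ^ 2) / 4) / (x * (x - 1))

/-- The total derivative of `okamotoVelocity` in `x` when `q` and `p` move with velocities `q'` and
`p'`; along a solution of the Hamiltonian system it is `q''`. -/
noncomputable def okamotoAcceleration (θ₀ θ₁ θₓ x q p q' p' : ℂ) : ℂ :=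
  (θ₀ * (q - 1) + θ₁ * q - 2 * q * (q - 1) * p
    + (2 * (3 * q ^ 2 - 2 * (1 + x) * q + x) * p
      - (θ₀ * (2 * q - 1 - x) + θ₁ * (2 * q - x) + (θₓ - 1) * (2 * q - 1))) * q'
    + 2 * q * (q - 1) * (q - x) * p'
    - (2 * x - 1) * okamotoVelocity θ₀ θ₁ θₓ x q p) / (x * (x - 1))

theorem hasDerivAt_okamotoVelocity {θ₀ θ₁ θₓ x q' p' : ℂ} {q p : ℂ → ℂ}
    (hx0 : x ≠ 0) (hx1 : x ≠ 1) (hq : HasDerivAt q q' x) (hp : HasDerivAt p p' x) :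
    HasDerivAt (fun z ↦ okamotoVelocity θ₀ θ₁ θₓ z (q z) (p z))
      (okamotoAcceleration θ₀ θ₁ θₓ x (q x) (p x) q' p') x := by
  have hx1' : x - 1 ≠ 0 := sub_ne_zero.mpr hx1
  have hx := hasDerivAt_id' x
  have hq1 := hq.sub_const 1
  have hqx := hq.fun_sub hx
  have hnum := ((((hq.const_mul 2).fun_mul hq1).fun_mul hqx).fun_mul hp).fun_sub
    ((((hq1.const_mul θ₀).fun_mul hqx).fun_add ((hq.const_mul θ₁).fun_mul hqx)).fun_add
      ((hq.const_mul (θₓ - 1)).fun_mul hq1))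
  refine (hnum.fun_div (hx.fun_mul (hx.sub_const 1)) (mul_ne_zero hx0 hx1')).congr_deriv ?_
  simp only [okamotoAcceleration, okamotoVelocity]
  field_simp
  ring

theorem okamotoAcceleration_eq_painleveVIRhs {θ₀ θ₁ θₓ θinf x q p v : ℂ} (hx0 : x ≠ 0) (hx1 : x ≠ 1)
    (hq0 : q ≠ 0) (hq1 : q ≠ 1) (hqx : q ≠ x) (hv : v = okamotoVelocity θ₀ θ₁ θₓ x q p) :
    okamotoAcceleration θ₀ θ₁ θₓ x q p v (okamotoForce θ₀ θ₁ θₓ θinf x q p) =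
      painleveVIRhs (θinf ^ 2 / 2) (-θ₀ ^ 2 / 2) (θ₁ ^ 2 / 2) ((1 - θₓ ^ 2) / 2) x q v := by
  have hx1' : x - 1 ≠ 0 := sub_ne_zero.mpr hx1
  have hq1' : q - 1 ≠ 0 := sub_ne_zero.mpr hq1
  have hqx' : q - x ≠ 0 := sub_ne_zero.mpr hqx
  simp only [painleveVIRhs, hv, okamotoAcceleration, okamotoVelocity, okamotoForce]
  field_simp
  ring

theorem SolvesPVI.of_okamoto {θ₀ θ₁ θₓ θinf : ℂ} {U : Set ℂ} {q p : ℂ → ℂ} (hU : IsOpen U)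
    (hreg : ∀ x ∈ U, x ≠ 0 ∧ x ≠ 1 ∧ q x ≠ 0 ∧ q x ≠ 1 ∧ q x ≠ x)
    (hq : ∀ x ∈ U, HasDerivAt q (okamotoVelocity θ₀ θ₁ θₓ x (q x) (p x)) x)
    (hp : ∀ x ∈ U, HasDerivAt p (okamotoForce θ₀ θ₁ θₓ θinf x (q x) (p x)) x) :
    SolvesPVI (θinf ^ 2 / 2) (-θ₀ ^ 2 / 2) (θ₁ ^ 2 / 2) ((1 - θₓ ^ 2) / 2) U q := by
  refine .of_hasDerivAt (y'' := fun x ↦ okamotoAcceleration θ₀ θ₁ θₓ x (q x) (p x)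
    (okamotoVelocity θ₀ θ₁ θₓ x (q x) (p x)) (okamotoForce θ₀ θ₁ θₓ θinf x (q x) (p x)))
    hU hq (fun x hx ↦ ?_) hreg fun x hx ↦ ?_
  · obtain ⟨h0, h1, -⟩ := hreg x hx
    exact hasDerivAt_okamotoVelocity h0 h1 (hq x hx) (hp x hx)
  · obtain ⟨h0, h1, hq0, hq1, hqx⟩ := hreg x hx
    exact okamotoAcceleration_eq_painleveVIRhs h0 h1 hq0 hq1 hqx rfl

/-- The momentum conjugate to `wCounter`, for the exponents `(θ₀, θ₁, θₓ, θinf) = (-6, 10, 1, 0)`: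
the solution `p` of `okamotoVelocity (-6) 10 1 x (wCounter x) p = deriv wCounter x`. -/
noncomputable def wCounterMomentum (x : ℂ) : ℂ :=
  8 * (2 * x + 7) ^ 2 / (x * (x - 1) * (x + 7) * (x + 8))

theorem add_eight_ne_zero_of_wCounter_ne_zero {x : ℂ} (h : wCounter x ≠ 0) : x + 8 ≠ 0 := by
  intro hx
  simp [wCounter, hx] at h

theorem add_seven_ne_zero_of_wCounter_ne_one {x : ℂ} (h : wCounter x ≠ 1) : x + 7 ≠ 0 := by
  intro hx
  obtain rfl := eq_neg_of_add_eq_zero_left hx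
  norm_num [wCounter] at h

theorem hasDerivAt_wCounter {x : ℂ} (hx0 : x ≠ 0) (hx1 : x ≠ 1) (hD : 2 * x + 7 ≠ 0)
    (hx7 : x + 7 ≠ 0) (hx8 : x + 8 ≠ 0) :
    HasDerivAt wCounter (okamotoVelocity (-6) 10 1 x (wCounter x) (wCounterMomentum x)) x := by
  have hx1' : x - 1 ≠ 0 := sub_ne_zero.mpr hx1
  -- `field_simp` turns `2 * x + 7` into `x * 2 + 7` here and then needs `hD` in that form.
  have hD' : x * 2 + 7 ≠ 0 := mul_comm 2 x ▸ hD
  have hx := hasDerivAt_id' x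
  have hnum := (hx.div_const 4).fun_mul
    ((hx.add_const 8).fun_mul (((hx.fun_pow 2).fun_add (hx.const_mul 14)).add_const 21))
  have hden := ((hx.const_mul 2).add_const 7).fun_pow 2
  refine (hnum.fun_div hden (pow_ne_zero 2 hD)).congr_deriv ?_
  simp only [okamotoVelocity, wCounter, wCounterMomentum]
  field_simp
  ring

theorem hasDerivAt_wCounterMomentum {x : ℂ} (hx0 : x ≠ 0) (hx1 : x ≠ 1) (hD : 2 * x + 7 ≠ 0)
    (hx7 : x + 7 ≠ 0) (hx8 : x + 8 ≠ 0) :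
    HasDerivAt wCounterMomentum
      (okamotoForce (-6) 10 1 0 x (wCounter x) (wCounterMomentum x)) x := by
  have hx1' : x - 1 ≠ 0 := sub_ne_zero.mpr hx1
  have hx := hasDerivAt_id' x
  have hnum := (((hx.const_mul 2).add_const 7).fun_pow 2).const_mul 8
  have hden := ((hx.fun_mul (hx.sub_const 1)).fun_mul (hx.add_const 7)).fun_mul (hx.add_const 8)
  refine (hnum.fun_div hden (by simp [hx0, hx1', hx7, hx8])).congr_deriv ?_
  simp only [okamotoForce, wCounter, wCounterMomentum]
  field_simp
  ring

/-- The rational function `w(x) = (x/4)(x+8)(x²+14x+21)/(2x+7)²` solves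
`P_VI(0, -18, 50, 0)` on any open set avoiding the singularities. -/
theorem wCounter_solves_painleveVI (U : Set ℂ) (hU : IsOpen U)
    (hreg : ∀ x ∈ U, x ≠ 0 ∧ x ≠ 1 ∧ 2 * x + 7 ≠ 0 ∧
      wCounter x ≠ 0 ∧ wCounter x ≠ 1 ∧ wCounter x ≠ x) :
    SolvesPVI 0 (-18) 50 0 U wCounter := by
  have hroots : ∀ x ∈ U, x + 7 ≠ 0 ∧ x + 8 ≠ 0 := fun x hx ↦
    have ⟨_, _, _, hw0, hw1, _⟩ := hreg x hx
    ⟨add_seven_ne_zero_of_wCounter_ne_one hw1, add_eight_ne_zero_of_wCounter_ne_zero hw0⟩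
  have hq : ∀ x ∈ U, HasDerivAt wCounter
      (okamotoVelocity (-6) 10 1 x (wCounter x) (wCounterMomentum x)) x := fun x hx ↦
    have ⟨h0, h1, hD, _⟩ := hreg x hx
    have ⟨h7, h8⟩ := hroots x hx
    hasDerivAt_wCounter h0 h1 hD h7 h8
  have hp : ∀ x ∈ U, HasDerivAt wCounterMomentum
      (okamotoForce (-6) 10 1 0 x (wCounter x) (wCounterMomentum x)) x := fun x hx ↦
    have ⟨h0, h1, hD, _⟩ := hreg x hx
    have ⟨h7, h8⟩ := hroots x hx
    hasDerivAt_wCounterMomentum h0 h1 hD h7 h8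
  have hsing : ∀ x ∈ U, x ≠ 0 ∧ x ≠ 1 ∧ wCounter x ≠ 0 ∧ wCounter x ≠ 1 ∧ wCounter x ≠ x :=
    fun x hx ↦
      have ⟨h0, h1, _, hw⟩ := hreg x hx
      ⟨h0, h1, hw⟩
  convert SolvesPVI.of_okamoto hU hsing hq hp using 1 <;> norm_num
end
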